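/- arXiv:2503.10007 — 2 statements merged into one kernel-verified Lean document; each statement's English description precedes it below -/
import Mathlib

section
/- For every unit vector |ψ⟩ ∈ ℂ², every θ ∈ ℝ, and every m ∈ {0,1}, applying the controlled-Z gate to |ψ⟩⊗|+⟩, then R_Z(−θ) followed by H to the first qubit, and projecting the first qubit onto |m⟩ leaves the second qubit in the (unnormalized) state (1/√2)·X^m H R_Z(−θ)|ψ⟩; that is, (⟨m|⊗I)·((H·R_Z(−θ))⊗I)·CZ·(|ψ⟩⊗|+⟩) = (1/√2)·X^m H R_Z(−θ)|ψ⟩. -/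
open Matrix Complex Kronecker

noncomputable section

/-- Pauli X gate. -/
def X : Matrix (Fin 2) (Fin 2) ℂ := !![0, 1; 1, 0]

/-- Pauli Z gate. -/
def Z : Matrix (Fin 2) (Fin 2) ℂ := !![1, 0; 0, -1]

/-- Hadamard gate. -/
def H : Matrix (Fin 2) (Fin 2) ℂ := ((Real.sqrt 2 : ℂ))⁻¹ • !![1, 1; 1, -1]

/-- Phase gate `S = diag(1, i)`. -/
def S : Matrix (Fin 2) (Fin 2) ℂ := !![1, 0; 0, Complex.I]

/-- `T = diag(1, e^{iπ/4})`. -/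
def T : Matrix (Fin 2) (Fin 2) ℂ := !![1, 0; 0, Complex.exp (Real.pi / 4 * Complex.I)]

/-- Z-rotation `R_Z(θ) = diag(1, e^{iθ})`. -/
def RZ (θ : ℝ) : Matrix (Fin 2) (Fin 2) ℂ := !![1, 0; 0, Complex.exp (θ * Complex.I)]

/-- Computational basis state `|0⟩`. -/
def ket0 : Fin 2 → ℂ := ![1, 0]

/-- Computational basis state `|1⟩`. -/
def ket1 : Fin 2 → ℂ := ![0, 1]

/-- Rotated plus state `|+_θ⟩ = (|0⟩ + e^{iθ}|1⟩)/√2`. -/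
def plusθ (θ : ℝ) : Fin 2 → ℂ := ((Real.sqrt 2 : ℂ))⁻¹ • ![1, Complex.exp (θ * Complex.I)]

/-- Rotated minus state `|−_θ⟩ = (|0⟩ − e^{iθ}|1⟩)/√2`. -/
def minusθ (θ : ℝ) : Fin 2 → ℂ := ((Real.sqrt 2 : ℂ))⁻¹ • ![1, -Complex.exp (θ * Complex.I)]

/-- `|+⟩ = (|0⟩+|1⟩)/√2`. -/
def plus : Fin 2 → ℂ := ((Real.sqrt 2 : ℂ))⁻¹ • ![1, 1]

/-- Kronecker (tensor) product of two qubit state vectors. -/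
def kronVec (v w : Fin 2 → ℂ) : Fin 2 × Fin 2 → ℂ := fun p => v p.1 * w p.2

/-- Controlled-Z gate `CZ = diag(1,1,1,−1)` on two qubits. -/
def CZ : Matrix (Fin 2 × Fin 2) (Fin 2 × Fin 2) ℂ :=
  Matrix.diagonal fun p => if p.1 = 1 ∧ p.2 = 1 then -1 else 1

/-- Controlled-NOT with control on the first tensor factor:
`CNOT12 (|a⟩⊗|b⟩) = |a⟩⊗|a⊕b⟩`. -/
def CNOT12 : Matrix (Fin 2 × Fin 2) (Fin 2 × Fin 2) ℂ :=
  Matrix.of fun p q => if p.1 = q.1 ∧ p.2 = q.1 + q.2 then 1 else 0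

/-- Controlled-NOT with control on the second tensor factor:
`CNOT21 (|a⟩⊗|b⟩) = |a⊕b⟩⊗|b⟩`. -/
def CNOT21 : Matrix (Fin 2 × Fin 2) (Fin 2 × Fin 2) ℂ :=
  Matrix.of fun p q => if p.1 = q.1 + q.2 ∧ p.2 = q.2 then 1 else 0

/-- Outer product `|v⟩⟨v|` of a qubit vector. -/
def outer (v : Fin 2 → ℂ) : Matrix (Fin 2) (Fin 2) ℂ := Matrix.of fun i j => v i * star (v j)


/-- MBQC gate teleportation of `J(θ) = H R_Z(θ)` via a rotated-basis measurement:
`(⟨m|⊗I)·((H·R_Z(−θ))⊗I)·CZ·(|ψ⟩⊗|+⟩) = (1/√2)·Xᵐ H R_Z(−θ)|ψ⟩`. -/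
theorem mbqc_gate_teleportation
    (ψ : Fin 2 → ℂ) (hψ : ∑ i, Complex.normSq (ψ i) = 1) (θ : ℝ) (m : Fin 2) :
    (fun i => ((((H * RZ (-θ)) ⊗ₖ (1 : Matrix (Fin 2) (Fin 2) ℂ)) * CZ).mulVec
        (kronVec ψ plus)) (m, i))
      = ((Real.sqrt 2 : ℂ))⁻¹ • (X ^ m.val * (H * RZ (-θ))).mulVec ψ := by
  ext i
  fin_cases m <;> fin_cases i <;>
    simp [H, RZ, X, CZ, plus, kronVec, Matrix.mulVec, dotProduct, Fintype.sum_prod_type,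
      Fin.sum_univ_two, Matrix.mul_apply, Matrix.one_apply, Matrix.diagonal_apply] <;>
    ring

end
end

section
/- For all a, b, m ∈ {0,1}, every θ ∈ ℝ, and every unit vector |ψ⟩ ∈ ℂ²: applying CNOT with control on the second qubit (prepared in |+_θ⟩) and target on the first qubit (prepared in the QHE-encrypted state X^a Z^b|ψ⟩), and then projecting the first qubit onto the computational-basis state |m⟩, leaves the second qubit in the (unnormalized) state (1/√2)·R_Z(θ)·X^{m⊕a} Z^b|ψ⟩, where ⊕ is XOR; in particular the measurement outcome m occurs with probability exactly 1/2 irrespective of a, b, θ, |ψ⟩. -/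
open Matrix Complex Kronecker

noncomputable section

/-- Injection of a QOTP/QHE ciphertext into a blind computation:
applying `CNOT` (control = second qubit prepared in `|+_θ⟩`, target = encrypted data qubit
`X^a Z^b |ψ⟩`) and projecting the first qubit onto `|m⟩` leaves the second qubit in
`(1/√2)·R_Z(θ)·X^{m⊕a} Z^b |ψ⟩`; each outcome `m` occurs with probability `1/2`. -/
theorem qhe_ciphertext_injection
    (a b m : Fin 2) (θ : ℝ) (ψ : Fin 2 → ℂ) (hψ : ∑ i, Complex.normSq (ψ i) = 1) :
    (fun i => (CNOT21.mulVec
        (kronVec ((X ^ a.val * Z ^ b.val).mulVec ψ) (plusθ θ))) (m, i))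
        = ((Real.sqrt 2 : ℂ))⁻¹ • (RZ θ * X ^ (m + a).val * Z ^ b.val).mulVec ψ
    ∧ ∑ i, Complex.normSq ((CNOT21.mulVec
        (kronVec ((X ^ a.val * Z ^ b.val).mulVec ψ) (plusθ θ))) (m, i)) = 1 / 2 := by
  have hexp : Complex.normSq (Complex.exp (θ * Complex.I)) = 1 := by
    rw [Complex.normSq_eq_norm_sq, Complex.norm_exp_ofReal_mul_I]; norm_num
  have hs : Complex.normSq ((Real.sqrt 2 : ℂ))⁻¹ = 1 / 2 := by
    rw [Complex.normSq_inv, Complex.normSq_ofReal, Real.mul_self_sqrt (by norm_num)]; norm_num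
  have hC : ∀ (v : Fin 2 × Fin 2 → ℂ) (m i : Fin 2),
      CNOT21.mulVec v (m, i) = v (m + i, i) := by
    intro v m i
    fin_cases m <;> fin_cases i <;>
      simp [CNOT21, Matrix.mulVec, dotProduct, Fintype.sum_prod_type, Fin.sum_univ_two]
  have h1 : (fun i => (CNOT21.mulVec
        (kronVec ((X ^ a.val * Z ^ b.val).mulVec ψ) (plusθ θ))) (m, i))
        = ((Real.sqrt 2 : ℂ))⁻¹ • (RZ θ * X ^ (m + a).val * Z ^ b.val).mulVec ψ := by
    funext i
    rw [hC]
    fin_cases a <;> fin_cases b <;> fin_cases m <;> fin_cases i <;>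
      simp [kronVec, plusθ, X, Z, RZ, Matrix.mulVec, dotProduct, Fin.sum_univ_two,
        Matrix.mul_apply] <;> ring
  refine ⟨h1, ?_⟩
  have h2 : ∀ i, (CNOT21.mulVec
        (kronVec ((X ^ a.val * Z ^ b.val).mulVec ψ) (plusθ θ))) (m, i)
        = (((Real.sqrt 2 : ℂ))⁻¹ • (RZ θ * X ^ (m + a).val * Z ^ b.val).mulVec ψ) i :=
    fun i => congrFun h1 i
  simp only [h2, Pi.smul_apply, smul_eq_mul, Complex.normSq_mul, hs]
  rw [← Finset.mul_sum]
  have h3 : ∑ i, Complex.normSq ((RZ θ * X ^ (m + a).val * Z ^ b.val).mulVec ψ i) = 1 := by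
    rw [← hψ]
    generalize m + a = c
    fin_cases b <;> fin_cases c <;>
      simp [X, Z, RZ, Matrix.mulVec, dotProduct, Fin.sum_univ_two,
        Matrix.mul_apply, hexp, add_comm]
  rw [h3, mul_one]

end
end
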